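/- arXiv:2303.10631 — 7 statements merged into one kernel-verified Lean document; each statement's English description precedes it below -/
import Mathlib

section
/- Let R be an integral domain and Σ an alphabet. Then every trim bideterministic weighted automaton over R and Σ is minimal, i.e., every weighted automaton over R and Σ with the same behaviour has at least as many states. -/
/-- A weighted automaton over a semiring `S` and alphabet `α`:
a finite type of states `Q`, a transition weighting `σ`, an initial
weighting `ι` and a terminal weighting `τ`. -/
structure WeightedAutomaton (S : Type) [Semiring S] (α : Type) : Type 1 where
  Q : Type
  [fintypeQ : Fintype Q]
  σ : Q → α → Q → S
  ι : Q → S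
  τ : Q → S

namespace WeightedAutomaton

attribute [instance] fintypeQ

variable {S : Type} [Semiring S] {α : Type}

/-- The "future" of a state on a word: the sum, over all runs from this state
upon the word, of the product of the transition weights times the terminal
weight of the last state.  (Sequences of states using a zero-weight transition
contribute zero, so this is exactly the sum over runs.) -/
def future (A : WeightedAutomaton S α) : List α → A.Q → S
  | [], q => A.τ q
  | c :: w, q => ∑ p : A.Q, A.σ q c p * A.future w p

/-- The behaviour of a weighted automaton: the series sending each word `w`
to the sum of the monomial weights `ι(q₀)·σ(q₀,c₁,q₁)⋯σ(q_{n−1},cₙ,qₙ)·τ(qₙ)`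
of all runs of the automaton upon `w`. -/
def behaviour (A : WeightedAutomaton S α) (w : List α) : S :=
  ∑ q : A.Q, A.ι q * A.future w q

/-- A weighted automaton is bideterministic if at most one state has nonzero
initial weight, at most one state has nonzero terminal weight, and for every
letter each state has at most one outgoing and at most one incoming transition
with nonzero weight upon that letter. -/
def Bideterministic (A : WeightedAutomaton S α) : Prop :=
  (∀ p q, A.ι p ≠ 0 → A.ι q ≠ 0 → p = q) ∧
  (∀ p q, A.τ p ≠ 0 → A.τ q ≠ 0 → p = q) ∧
  (∀ p c q q', A.σ p c q ≠ 0 → A.σ p c q' ≠ 0 → q = q') ∧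
  (∀ p p' c q, A.σ p c q ≠ 0 → A.σ p' c q ≠ 0 → p = p')

/-- `A.IsPath q l` : starting in state `q`, the list `l` of (letter, next state)
pairs follows transitions all of which have nonzero weight, i.e. it is a run. -/
def IsPath (A : WeightedAutomaton S α) : A.Q → List (α × A.Q) → Prop
  | _, [] => True
  | q, (c, q') :: l => A.σ q c q' ≠ 0 ∧ A.IsPath q' l

/-- The last state of a path. -/
def pathEnd (A : WeightedAutomaton S α) : A.Q → List (α × A.Q) → A.Q
  | q, [] => q
  | _, (_, q') :: l => A.pathEnd q' l

/-- The product of the transition weights along a path. -/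
def pathWeight (A : WeightedAutomaton S α) : A.Q → List (α × A.Q) → S
  | _, [] => 1
  | q, (c, q') :: l => A.σ q c q' * A.pathWeight q' l

/-- A state is accessible if some run from a state with nonzero initial weight
ends in it. -/
def Accessible (A : WeightedAutomaton S α) (q : A.Q) : Prop :=
  ∃ p l, A.ι p ≠ 0 ∧ A.IsPath p l ∧ A.pathEnd p l = q

/-- A state is coaccessible if some run from it ends in a state with nonzero
terminal weight. -/
def Coaccessible (A : WeightedAutomaton S α) (q : A.Q) : Prop :=
  ∃ l, A.IsPath q l ∧ A.τ (A.pathEnd q l) ≠ 0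

/-- A weighted automaton is trim if all its states are accessible and
coaccessible. -/
def Trim (A : WeightedAutomaton S α) : Prop :=
  ∀ q, A.Accessible q ∧ A.Coaccessible q

/-- A weighted automaton is semantically trim if every state lies on some run
whose monomial weight is nonzero. -/
def SemanticallyTrim (A : WeightedAutomaton S α) : Prop :=
  ∀ q, ∃ p l, A.IsPath p l ∧ (q = p ∨ q ∈ l.map Prod.snd) ∧
    A.ι p * A.pathWeight p l * A.τ (A.pathEnd p l) ≠ 0

/-- The number of states of a weighted automaton. -/
def states (A : WeightedAutomaton S α) : ℕ := Fintype.card A.Q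

/-- A weighted automaton is minimal if every weighted automaton over the same
semiring and alphabet with the same behaviour has at least as many states. -/
def Minimal (A : WeightedAutomaton S α) : Prop :=
  ∀ B : WeightedAutomaton S α, B.behaviour = A.behaviour → A.states ≤ B.states

end WeightedAutomaton

namespace WeightedAutomaton

/-- Forward propagation of a weight vector along a word. -/
def fwd {S : Type} [Semiring S] {α : Type} (A : WeightedAutomaton S α) :
    (A.Q → S) → List α → A.Q → S
  | x, [] => x
  | x, c :: w => A.fwd (fun q => ∑ p : A.Q, x p * A.σ p c q) w

theorem sum_future_append {S : Type} [Semiring S] {α : Type} (A : WeightedAutomaton S α)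
    (w v : List α) (x : A.Q → S) :
    ∑ q, x q * A.future (w ++ v) q = ∑ q, A.fwd x w q * A.future v q := by
  induction w generalizing x with
  | nil => rfl
  | cons c w ih =>
    simp only [fwd, ← ih, List.cons_append, future, Finset.mul_sum, Finset.sum_mul, mul_assoc]
    rw [Finset.sum_comm]

theorem fwd_path {R : Type} [CommRing R] [IsDomain R] {α : Type} (A : WeightedAutomaton R α)
    (hd : ∀ p c q q', A.σ p c q ≠ 0 → A.σ p c q' ≠ 0 → q = q')
    (l : List (α × A.Q)) (p : A.Q) (x : A.Q → R) (hx : ∀ q, x q ≠ 0 ↔ q = p)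
    (hl : A.IsPath p l) :
    ∀ q, A.fwd x (l.map Prod.fst) q ≠ 0 ↔ q = A.pathEnd p l := by
  induction l generalizing p x with
  | nil => exact hx
  | cons cq l ih =>
    obtain ⟨c, p'⟩ := cq
    obtain ⟨h1, h2⟩ := hl
    refine ih p' _ ?_ h2
    intro q
    have hs : ∑ s : A.Q, x s * A.σ s c q = x p * A.σ p c q := by
      apply Fintype.sum_eq_single
      intro s hs
      have : x s = 0 := by
        by_contra h
        exact hs ((hx s).1 h)
      rw [this, zero_mul]
    have hp := (hx p).2 rfl
    rw [hs]
    constructor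
    · intro h
      exact hd p c q p' (right_ne_zero_of_mul h) h1
    · rintro rfl
      exact mul_ne_zero hp h1

theorem future_path {R : Type} [CommRing R] [IsDomain R] {α : Type} (A : WeightedAutomaton R α)
    (ht : ∀ p q, A.τ p ≠ 0 → A.τ q ≠ 0 → p = q)
    (hc : ∀ p p' c q, A.σ p c q ≠ 0 → A.σ p' c q ≠ 0 → p = p')
    (l : List (α × A.Q)) (q : A.Q) (hl : A.IsPath q l) (hτ : A.τ (A.pathEnd q l) ≠ 0) :
    ∀ p, A.future (l.map Prod.fst) p ≠ 0 ↔ p = q := by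
  induction l generalizing q with
  | nil =>
    intro p
    constructor
    · intro h
      exact ht p q h hτ
    · rintro rfl
      exact hτ
  | cons cq l ih =>
    obtain ⟨c, q'⟩ := cq
    obtain ⟨h1, h2⟩ := hl
    have ih' := ih q' h2 hτ
    intro p
    have hs : A.future (List.map Prod.fst ((c, q') :: l)) p
        = A.σ p c q' * A.future (l.map Prod.fst) q' := by
      apply Fintype.sum_eq_single
      intro s hs
      have : A.future (l.map Prod.fst) s = 0 := by
        by_contra h
        exact hs ((ih' s).1 h)
      rw [this, mul_zero]
    rw [hs]
    constructor
    · intro h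
      exact hc p q c q' (left_ne_zero_of_mul h) h1
    · rintro rfl
      exact mul_ne_zero h1 ((ih' q').2 rfl)

end WeightedAutomaton

/-- Every trim bideterministic weighted automaton over an integral domain is
minimal. -/
theorem trim_bideterministic_minimal_of_isDomain
    {R : Type} [CommRing R] [IsDomain R] {α : Type} [Fintype α] [Nonempty α]
    (A : WeightedAutomaton R α) (htrim : A.Trim) (hbidet : A.Bideterministic) :
    A.Minimal := by
  intro B hB
  obtain ⟨hi, ht, hd, hc⟩ := hbidet
  have hu : ∀ p, ∃ u : List α, ∀ q, A.fwd A.ι u q ≠ 0 ↔ q = p := by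
    intro p
    obtain ⟨⟨p0, l, h0, hl, rfl⟩, -⟩ := htrim p
    refine ⟨l.map Prod.fst, A.fwd_path hd l p0 A.ι (fun q => ⟨fun h => hi q p0 h h0, ?_⟩) hl⟩
    rintro rfl
    exact h0
  have hv : ∀ q, ∃ v : List α, ∀ p, A.future v p ≠ 0 ↔ p = q := by
    intro q
    obtain ⟨-, l, hl, hτ⟩ := htrim q
    exact ⟨l.map Prod.fst, A.future_path ht hc l q hl hτ⟩
  choose u hu using hu
  choose v hv using hv
  have hH : ∀ p q, A.behaviour (u p ++ v q) ≠ 0 ↔ p = q := by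
    intro p q
    have : A.behaviour (u p ++ v q) = A.fwd A.ι (u p) p * A.future (v q) p := by
      refine (A.sum_future_append _ _ _).trans (Fintype.sum_eq_single p ?_)
      intro s hs
      have : A.fwd A.ι (u p) s = 0 := by
        by_contra h
        exact hs ((hu p s).1 h)
      rw [this, zero_mul]
    rw [this, ← hv q p]
    exact ⟨right_ne_zero_of_mul, mul_ne_zero ((hu p p).2 rfl)⟩
  have hli : LinearIndependent R (fun p : A.Q => B.fwd B.ι (u p)) := by
    rw [Fintype.linearIndependent_iff]
    intro g hg q
    have h1 : ∑ p, g p * A.behaviour (u p ++ v q) = 0 := by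
      have h2 : ∀ p, A.behaviour (u p ++ v q)
          = ∑ s, B.fwd B.ι (u p) s * B.future (v q) s := by
        intro p
        rw [← hB]
        exact B.sum_future_append _ _ _
      simp only [h2, Finset.mul_sum]
      rw [Finset.sum_comm]
      refine Finset.sum_eq_zero fun s _ => ?_
      have h3 := congrFun hg s
      simp only [Finset.sum_apply, Pi.smul_apply, smul_eq_mul, Pi.zero_apply] at h3
      simp only [← mul_assoc]
      rw [← Finset.sum_mul, h3, zero_mul]
    rw [Fintype.sum_eq_single q] at h1
    · exact (mul_eq_zero.1 h1).resolve_right ((hH q q).2 rfl)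
    · intro p hp
      have : A.behaviour (u p ++ v q) = 0 := by
        by_contra h
        exact hp ((hH p q).1 h)
      rw [this, mul_zero]
  have := hli.fintype_card_le_finrank
  rwa [Module.finrank_fintype_fun_eq_card] at this
end

section
/- Let S be a semiring that is not zero-divisor free, i.e., there exist s, t ∈ S with s ≠ 0, t ≠ 0, and s·t = 0. Then for every alphabet Σ there exists a trim bideterministic weighted automaton over S and Σ that is not minimal. -/
/-- Over a semiring that is not zero-divisor free, there is a trim
bideterministic weighted automaton that is not minimal. -/
theorem exists_trim_bideterministic_not_minimal_of_zeroDivisor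
    {S : Type} [Semiring S] (s t : S) (hs : s ≠ 0) (ht : t ≠ 0) (hst : s * t = 0)
    (α : Type) [Fintype α] [Nonempty α] :
    ∃ A : WeightedAutomaton S α, A.Trim ∧ A.Bideterministic ∧ ¬ A.Minimal := by
  classical
  refine ⟨{ Q := Unit, σ := fun _ _ _ => 0, ι := fun _ => s, τ := fun _ => t }, ?_, ?_, ?_⟩
  · intro q
    exact ⟨⟨(), [], hs, trivial, rfl⟩, ⟨[], trivial, ht⟩⟩
  · refine ⟨fun _ _ _ _ => rfl, fun _ _ _ _ => rfl, fun _ _ _ _ _ _ => rfl,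
      fun _ _ _ _ _ _ => rfl⟩
  · intro h
    have h1 := h { Q := Empty, σ := fun _ _ _ => 0, ι := fun _ => 0, τ := fun _ => 0 } (by
      funext w
      cases w with
      | nil => simp [WeightedAutomaton.behaviour, WeightedAutomaton.future, hst]
      | cons c w => simp [WeightedAutomaton.behaviour, WeightedAutomaton.future])
    simp [WeightedAutomaton.states] at h1
end

section
/- Let S be a commutative semiring containing elements s, t, s', t' ∈ S such that s·t ≠ 0, s'·t' ≠ 0, s·t' = 0, and s'·t = 0. Then there is a trim bideterministic weighted automaton A over S and a two-letter alphabet {a, b} such that no minimal weighted automaton over S whose behaviour equals ‖A‖ is bideterministic. -/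
namespace WeightedAutomaton

variable {S : Type} [CommSemiring S]

/-- The five-state trim bideterministic automaton. -/
def autA (s t s' t' : S) : WeightedAutomaton S Bool where
  Q := Fin 5
  σ := fun p c q =>
    if p = 0 ∧ c = false ∧ q = 4 then s
    else if p = 4 ∧ c = false ∧ q = 3 then t
    else if p = 0 ∧ c = true ∧ q = 1 then s'
    else if p = 1 ∧ c = false ∧ q = 2 then 1
    else if p = 2 ∧ c = true ∧ q = 3 then t'
    else 0
  ι := fun p => if p = 0 then 1 else 0
  τ := fun p => if p = 3 then 1 else 0

/-- The equivalent four-state automaton. -/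
def autC (s t s' t' : S) : WeightedAutomaton S Bool where
  Q := Fin 4
  σ := fun p c q =>
    if p = 0 ∧ c = false ∧ q = 2 then s
    else if p = 0 ∧ c = true ∧ q = 1 then 1
    else if p = 1 ∧ c = false ∧ q = 2 then s'
    else if p = 2 ∧ c = false ∧ q = 3 then t
    else if p = 2 ∧ c = true ∧ q = 3 then t'
    else 0
  ι := fun p => if p = 0 then 1 else 0
  τ := fun p => if p = 3 then 1 else 0

/-- The common behaviour. -/
def target (s t s' t' : S) (w : List Bool) : S :=
  if w = [false, false] then s * t else if w = [true, false, true] then s' * t' else 0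

theorem autA_behaviour (s t s' t' : S) (w : List Bool) :
    (autA s t s' t').behaviour w = target s t s' t' w := by
  have f3 : ∀ c w, (autA s t s' t').future (c :: w) (3 : Fin 5) = 0 := by
    intro c w
    change ∑ p : Fin 5, _ = _
    simp [Fin.sum_univ_succ, autA]
  have hb : (autA s t s' t').behaviour w = (autA s t s' t').future w (0 : Fin 5) := by
    change ∑ p : Fin 5, _ = _
    simp [autA]
  have f0 : ∀ c w, (autA s t s' t').future (c :: w) (0 : Fin 5) =
      if c then s' * (autA s t s' t').future w (1 : Fin 5)
      else s * (autA s t s' t').future w (4 : Fin 5) := by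
    intro c w
    change ∑ p : Fin 5, (autA s t s' t').σ _ _ p * (autA s t s' t').future w p = _
    cases c <;> simp [autA]
  have f1 : ∀ c w, (autA s t s' t').future (c :: w) (1 : Fin 5) =
      if c then 0 else (autA s t s' t').future w (2 : Fin 5) := by
    intro c w
    change ∑ p : Fin 5, (autA s t s' t').σ _ _ p * (autA s t s' t').future w p = _
    cases c <;> simp [autA]
  have f2 : ∀ c w, (autA s t s' t').future (c :: w) (2 : Fin 5) =
      if c then t' * (autA s t s' t').future w (3 : Fin 5) else 0 := by
    intro c w
    change ∑ p : Fin 5, (autA s t s' t').σ _ _ p * (autA s t s' t').future w p = _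
    cases c <;> simp [autA]
  have f4 : ∀ c w, (autA s t s' t').future (c :: w) (4 : Fin 5) =
      if c then 0 else t * (autA s t s' t').future w (3 : Fin 5) := by
    intro c w
    change ∑ p : Fin 5, (autA s t s' t').σ _ _ p * (autA s t s' t').future w p = _
    cases c <;> simp [autA]
  have n : ∀ q : Fin 5, (autA s t s' t').future [] q = if q = 3 then 1 else 0 := fun q => rfl
  rw [hb]
  rcases w with _ | ⟨c1, _ | ⟨c2, _ | ⟨c3, _ | ⟨c4, w⟩⟩⟩⟩
  · simp [n, target]
  · cases c1 <;> simp [f0, n, target]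
  · cases c1 <;> cases c2 <;> simp [f0, f1, f2, f4, n, target]
  · cases c1 <;> cases c2 <;> cases c3 <;> simp [f0, f1, f2, f3, f4, n, target]
  · cases c1 <;> cases c2 <;> cases c3 <;> simp [f0, f1, f2, f3, f4, target]

theorem autC_behaviour (s t s' t' : S) (h3 : s * t' = 0) (h4 : s' * t = 0) (w : List Bool) :
    (autC s t s' t').behaviour w = target s t s' t' w := by
  have f3 : ∀ c w, (autC s t s' t').future (c :: w) (3 : Fin 4) = 0 := by
    intro c w
    change ∑ p : Fin 4, _ = _
    simp [Fin.sum_univ_succ, autC]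
  have hb : (autC s t s' t').behaviour w = (autC s t s' t').future w (0 : Fin 4) := by
    change ∑ p : Fin 4, _ = _
    simp [autC]
  have f0 : ∀ c w, (autC s t s' t').future (c :: w) (0 : Fin 4) =
      if c then (autC s t s' t').future w (1 : Fin 4)
      else s * (autC s t s' t').future w (2 : Fin 4) := by
    intro c w
    change ∑ p : Fin 4, (autC s t s' t').σ _ _ p * (autC s t s' t').future w p = _
    cases c <;> simp [autC]
  have f1 : ∀ c w, (autC s t s' t').future (c :: w) (1 : Fin 4) =
      if c then 0 else s' * (autC s t s' t').future w (2 : Fin 4) := by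
    intro c w
    change ∑ p : Fin 4, (autC s t s' t').σ _ _ p * (autC s t s' t').future w p = _
    cases c <;> simp [autC]
  have f2 : ∀ c w, (autC s t s' t').future (c :: w) (2 : Fin 4) =
      if c then t' * (autC s t s' t').future w (3 : Fin 4)
      else t * (autC s t s' t').future w (3 : Fin 4) := by
    intro c w
    change ∑ p : Fin 4, (autC s t s' t').σ _ _ p * (autC s t s' t').future w p = _
    cases c <;> simp [autC]
  have n : ∀ q : Fin 4, (autC s t s' t').future [] q = if q = 3 then 1 else 0 := fun q => rfl
  rw [hb]
  rcases w with _ | ⟨c1, _ | ⟨c2, _ | ⟨c3, _ | ⟨c4, w⟩⟩⟩⟩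
  · simp [n, target]
  · cases c1 <;> simp [f0, f1, f2, n, target]
  · cases c1 <;> cases c2 <;> simp [f0, f1, f2, n, target, h3]
  · cases c1 <;> cases c2 <;> cases c3 <;> simp [f0, f1, f2, f3, n, target, h4]
  · cases c1 <;> cases c2 <;> cases c3 <;> simp [f0, f1, f2, f3, target]

theorem autA_trim (s t s' t' : S) (one : (1 : S) ≠ 0) (hs : s ≠ 0) (ht : t ≠ 0)
    (hs' : s' ≠ 0) (ht' : t' ≠ 0) : (autA s t s' t').Trim := by
  have i0 : (autA s t s' t').ι (0 : Fin 5) ≠ 0 := by simpa [autA] using one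
  have e3 : (autA s t s' t').τ (3 : Fin 5) ≠ 0 := by simpa [autA] using one
  have e04 : (autA s t s' t').σ (0 : Fin 5) false (4 : Fin 5) ≠ 0 := by simpa [autA] using hs
  have e43 : (autA s t s' t').σ (4 : Fin 5) false (3 : Fin 5) ≠ 0 := by simpa [autA] using ht
  have e01 : (autA s t s' t').σ (0 : Fin 5) true (1 : Fin 5) ≠ 0 := by simpa [autA] using hs'
  have e12 : (autA s t s' t').σ (1 : Fin 5) false (2 : Fin 5) ≠ 0 := by simpa [autA] using one
  have e23 : (autA s t s' t').σ (2 : Fin 5) true (3 : Fin 5) ≠ 0 := by simpa [autA] using ht'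
  intro q
  change Fin 5 at q
  fin_cases q
  · exact ⟨⟨(0 : Fin 5), [], i0, trivial, rfl⟩,
      [(false, (4 : Fin 5)), (false, (3 : Fin 5))], ⟨e04, e43, trivial⟩, e3⟩
  · exact ⟨⟨(0 : Fin 5), [(true, (1 : Fin 5))], i0, ⟨e01, trivial⟩, rfl⟩,
      [(false, (2 : Fin 5)), (true, (3 : Fin 5))], ⟨e12, e23, trivial⟩, e3⟩
  · exact ⟨⟨(0 : Fin 5), [(true, (1 : Fin 5)), (false, (2 : Fin 5))], i0,
      ⟨e01, e12, trivial⟩, rfl⟩, [(true, (3 : Fin 5))], ⟨e23, trivial⟩, e3⟩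
  · exact ⟨⟨(0 : Fin 5), [(false, (4 : Fin 5)), (false, (3 : Fin 5))], i0,
      ⟨e04, e43, trivial⟩, rfl⟩, [], trivial, e3⟩
  · exact ⟨⟨(0 : Fin 5), [(false, (4 : Fin 5))], i0, ⟨e04, trivial⟩, rfl⟩,
      [(false, (3 : Fin 5))], ⟨e43, trivial⟩, e3⟩

theorem autA_supp (s t s' t' : S) (p : Fin 5) (c : Bool) (q : Fin 5)
    (h : (autA s t s' t').σ p c q ≠ 0) :
    (p = 0 ∧ c = false ∧ q = 4) ∨ (p = 4 ∧ c = false ∧ q = 3) ∨ (p = 0 ∧ c = true ∧ q = 1) ∨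
    (p = 1 ∧ c = false ∧ q = 2) ∨ (p = 2 ∧ c = true ∧ q = 3) := by
  by_contra hn
  push Not at hn
  apply h
  simp only [autA]
  grind

theorem autA_bidet (s t s' t' : S) : (autA s t s' t').Bideterministic := by
  refine ⟨?_, ?_, ?_, ?_⟩
  · intro (p : Fin 5) (q : Fin 5) hp hq
    simp only [autA] at hp hq
    grind
  · intro (p : Fin 5) (q : Fin 5) hp hq
    simp only [autA] at hp hq
    grind
  · intro (p : Fin 5) c (q : Fin 5) (q' : Fin 5) hp hq
    have a := autA_supp s t s' t' _ _ _ hp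
    have b := autA_supp s t s' t' _ _ _ hq
    clear hp hq
    change q = q'
    revert p c q q'
    decide
  · intro (p : Fin 5) (p' : Fin 5) c (q : Fin 5) hp hq
    have a := autA_supp s t s' t' _ _ _ hp
    have b := autA_supp s t s' t' _ _ _ hq
    clear hp hq
    change p = p'
    revert p c p' q
    decide

theorem Bideterministic.beh {B : WeightedAutomaton S Bool} (hB : B.Bideterministic)
    {q : B.Q} (hq : B.ι q ≠ 0) (w : List Bool) : B.behaviour w = B.ι q * B.future w q := by
  unfold behaviour
  refine Finset.sum_eq_single q (fun p _ hp => ?_) (by simp)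
  by_cases h : B.ι p = 0
  · simp [h]
  · exact absurd (hB.1 p q h hq) hp

theorem Bideterministic.fut {B : WeightedAutomaton S Bool} (hB : B.Bideterministic)
    {q r : B.Q} {c : Bool} (hq : B.σ q c r ≠ 0) (w : List Bool) :
    B.future (c :: w) q = B.σ q c r * B.future w r := by
  change ∑ p, _ = _
  refine Finset.sum_eq_single r (fun p _ hp => ?_) (by simp)
  by_cases h : B.σ q c p = 0
  · simp [h]
  · exact absurd (hB.2.2.1 q c p r h hq) hp

theorem exists_init {B : WeightedAutomaton S Bool} {w : List Bool} (h : B.behaviour w ≠ 0) :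
    ∃ q, B.ι q ≠ 0 := by
  obtain ⟨q, _, hq⟩ := Finset.exists_ne_zero_of_sum_ne_zero h
  exact ⟨q, left_ne_zero_of_mul hq⟩

theorem exists_step {B : WeightedAutomaton S Bool} {w : List Bool} {c : Bool} {q : B.Q} {x : S}
    (h : x * B.future (c :: w) q ≠ 0) : ∃ r, B.σ q c r ≠ 0 := by
  obtain ⟨r, _, hr⟩ := Finset.exists_ne_zero_of_sum_ne_zero (right_ne_zero_of_mul h)
  exact ⟨r, left_ne_zero_of_mul hr⟩

theorem no_small {B : WeightedAutomaton S Bool} (hB : B.Bideterministic)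
    {s t s' t' : S} (h1 : s * t ≠ 0) (h2 : s' * t' ≠ 0)
    (hb : ∀ w, B.behaviour w = target s t s' t' w) : 5 ≤ B.states := by
  have ha : B.behaviour [false, false] ≠ 0 := by simpa [hb, target] using h1
  have hc : B.behaviour [true, false, true] ≠ 0 := by simpa [hb, target] using h2
  obtain ⟨q0, i0⟩ := exists_init ha
  have Z : ∀ w, w ≠ [false, false] → w ≠ [true, false, true] →
      B.ι q0 * B.future w q0 = 0 := by
    intro w hw hw'
    rw [← hB.beh i0, hb]
    simp [target, hw, hw']
  rw [hB.beh i0] at ha hc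
  obtain ⟨q1, e1⟩ := exists_step hc
  rw [hB.fut e1, ← mul_assoc] at hc
  obtain ⟨q2, e2⟩ := exists_step hc
  rw [hB.fut e2, ← mul_assoc] at hc
  obtain ⟨q3, e3⟩ := exists_step hc
  rw [hB.fut e3, ← mul_assoc] at hc
  obtain ⟨x, g1⟩ := exists_step ha
  rw [hB.fut g1, ← mul_assoc] at ha
  obtain ⟨y, g2⟩ := exists_step ha
  rw [hB.fut g2, ← mul_assoc] at ha
  have hy : y = q3 := hB.2.1 _ _ (right_ne_zero_of_mul ha) (right_ne_zero_of_mul hc)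
  subst hy
  have z0 := Z [] (by simp) (by simp)
  have za := Z [false] (by simp) (by simp)
  have zb := Z [true] (by simp) (by simp)
  have zab := Z [false, true] (by simp) (by simp)
  have zba := Z [true, false] (by simp) (by simp)
  have zbb := Z [true, true] (by simp) (by simp)
  simp only [future] at ha hc
  have n01 : q0 ≠ q1 := by
    rintro rfl
    rw [hB.fut e2, hB.fut e3] at zab
    simp only [future] at zab
    apply hc
    refine Eq.trans ?_ (mul_eq_zero_of_right (B.σ q0 true q0) zab)
    ring
  have n02 : q0 ≠ q2 := by
    rintro rfl
    rw [hB.fut e3] at zb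
    simp only [future] at zb
    apply hc
    refine Eq.trans ?_ (mul_eq_zero_of_right (B.σ q0 true q1 * B.σ q1 false q0) zb)
    ring
  have n03 : q0 ≠ y := by
    rintro rfl
    simp only [future] at z0
    apply hc
    refine Eq.trans ?_ (mul_eq_zero_of_right (B.σ q0 true q1 * B.σ q1 false q2 * B.σ q2 true q0) z0)
    ring
  have n12 : q1 ≠ q2 := by
    rintro rfl
    rw [hB.fut e1, hB.fut e3] at zbb
    simp only [future] at zbb
    apply hc
    refine Eq.trans ?_ (mul_eq_zero_of_right (B.σ q1 false q1) zbb)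
    ring
  have n13 : q1 ≠ y := by
    rintro rfl
    rw [hB.fut e1] at zb
    simp only [future] at zb
    apply hc
    refine Eq.trans ?_ (mul_eq_zero_of_right (B.σ q1 false q2 * B.σ q2 true q1) zb)
    ring
  have n23 : q2 ≠ y := by
    rintro rfl
    rw [hB.fut e1, hB.fut e2] at zba
    simp only [future] at zba
    apply hc
    refine Eq.trans ?_ (mul_eq_zero_of_right (B.σ q2 true q2) zba)
    ring
  have nx0 : q0 ≠ x := by
    rintro rfl
    rw [hB.fut g2] at za
    simp only [future] at za
    apply ha
    refine Eq.trans ?_ (mul_eq_zero_of_right (B.σ q0 false q0) za)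
    ring
  have nx3 : y ≠ x := by
    rintro rfl
    rw [hB.fut g1] at za
    simp only [future] at za
    apply ha
    refine Eq.trans ?_ (mul_eq_zero_of_right (B.σ y false y) za)
    ring
  have nx1 : q1 ≠ x := by
    rintro rfl
    exact n23 (hB.2.2.1 _ _ _ _ e2 g2)
  have nx2 : q2 ≠ x := by
    rintro rfl
    exact n01 (hB.2.2.2 _ _ _ _ g1 e2)
  classical
  have hcard : ({q0, q1, q2, y, x} : Finset B.Q).card = 5 := by
    simp [*]
  rw [← hcard]
  exact Finset.card_le_univ _

end WeightedAutomaton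

/-- Over a commutative semiring with elements `s, t, s', t'` such that
`s*t ≠ 0 ≠ s'*t'` and `s*t' = 0 = s'*t`, there is a trim bideterministic
weighted automaton over the two-letter alphabet `Bool` none of whose
equivalent minimal automata is bideterministic. -/
theorem exists_trim_bideterministic_no_minimal_bideterministic
    {S : Type} [CommSemiring S] (s t s' t' : S)
    (h1 : s * t ≠ 0) (h2 : s' * t' ≠ 0) (h3 : s * t' = 0) (h4 : s' * t = 0) :
    ∃ A : WeightedAutomaton S Bool, A.Trim ∧ A.Bideterministic ∧
      ∀ B : WeightedAutomaton S Bool,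
        B.behaviour = A.behaviour → B.Minimal → ¬ B.Bideterministic := by
  refine ⟨WeightedAutomaton.autA s t s' t', ?_, WeightedAutomaton.autA_bidet s t s' t', ?_⟩
  · exact WeightedAutomaton.autA_trim s t s' t' (fun h => h1 (by rw [← mul_one (s * t), h, mul_zero]))
      (left_ne_zero_of_mul h1) (right_ne_zero_of_mul h1)
      (left_ne_zero_of_mul h2) (right_ne_zero_of_mul h2)
  · intro B hB hmin hdet
    have hw : ∀ w, B.behaviour w = WeightedAutomaton.target s t s' t' w := fun w => by
      rw [hB, WeightedAutomaton.autA_behaviour]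
    have h5 := WeightedAutomaton.no_small hdet h1 h2 hw
    have h6 := hmin (WeightedAutomaton.autC s t s' t') (by
      funext w
      rw [hw, WeightedAutomaton.autC_behaviour s t s' t' h3 h4])
    have h7 : (WeightedAutomaton.autC s t s' t').states = 4 := Fintype.card_fin 4
    omega
end

section
/- Let S be a commutative semiring containing elements s, t, s', t' ∈ S such that s·t ≠ 0, s'·t' ≠ 0, s·t' = 0, and s'·t = 0, and let Σ = {a, b} be a two-letter alphabet. Consider the series r : Σ* → S defined by r(aba) = s·t, r(bb) = s'·t', and r(w) = 0 for all other words w. Then r is the behaviour of some weighted automaton over S with exactly 4 states, while every bideterministic weighted automaton over S whose behaviour equals r has at least 5 states. -/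
namespace FiveStateAux

open WeightedAutomaton

/-- The four-state automaton. -/
def aut {S : Type} [CommSemiring S] (s t s' t' : S) : WeightedAutomaton S Bool where
  Q := Fin 4
  σ := fun p c q =>
    match p, c, q with
    | 0, false, 1 => s
    | 1, true, 2 => 1
    | 2, false, 3 => t
    | 0, true, 2 => s'
    | 2, true, 3 => t'
    | _, _, _ => 0
  ι := ![1, 0, 0, 0]
  τ := ![0, 0, 0, 1]

section
variable {S : Type} [CommSemiring S] (s t s' t' : S)

lemma fut_cons (c : Bool) (w : List Bool) (q : Fin 4) :
    (aut s t s' t').future (c :: w) q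
      = ∑ p : Fin 4, (aut s t s' t').σ q c p * (aut s t s' t').future w p := rfl

lemma fut3 (w : List Bool) : (aut s t s' t').future w (3 : Fin 4) = if w = [] then 1 else 0 := by
  rcases w with _ | ⟨c, w⟩
  · simp [future, aut]
  · rw [fut_cons]; cases c <;> simp [Fin.sum_univ_four, aut]

lemma fut2 (w : List Bool) : (aut s t s' t').future w (2 : Fin 4)
    = if w = [false] then t else if w = [true] then t' else 0 := by
  rcases w with _ | ⟨c, w⟩
  · simp [future, aut]
  · rw [fut_cons, Fin.sum_univ_four, fut3]
    cases c <;> simp [aut]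

lemma fut1 (w : List Bool) : (aut s t s' t').future w (1 : Fin 4)
    = if w = [true, false] then t else if w = [true, true] then t' else 0 := by
  rcases w with _ | ⟨c, w⟩
  · simp [future, aut]
  · rw [fut_cons, Fin.sum_univ_four, fut2, fut3]
    cases c <;> simp [aut]

lemma fut0 (h3 : s * t' = 0) (h4 : s' * t = 0) (w : List Bool) :
    (aut s t s' t').future w (0 : Fin 4)
    = if w = [false, true, false] then s * t else if w = [true, true] then s' * t' else 0 := by
  rcases w with _ | ⟨c, w⟩
  · simp [future, aut]
  · rw [fut_cons, Fin.sum_univ_four, fut1, fut2, fut3]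
    cases c <;> simp [aut] <;> split_ifs <;> simp_all

lemma aut_behaviour (h3 : s * t' = 0) (h4 : s' * t = 0) (w : List Bool) :
    (aut s t s' t').behaviour w
    = if w = [false, true, false] then s * t else if w = [true, true] then s' * t' else 0 := by
  rw [← fut0 s t s' t' h3 h4]
  change ∑ q : Fin 4, (aut s t s' t').ι q * (aut s t s' t').future w q = _
  rw [Fin.sum_univ_four]
  simp [aut]
end

section
variable {S : Type} [CommSemiring S] (B : WeightedAutomaton S Bool)

lemma fut_step (hB : B.Bideterministic) {q p : B.Q} {c : Bool} (h : B.σ q c p ≠ 0)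
    (w : List Bool) : B.future (c :: w) q = B.σ q c p * B.future w p := by
  change ∑ p : B.Q, B.σ q c p * B.future w p = _
  refine Finset.sum_eq_single p (fun r _ hr => ?_) (by simp)
  have : B.σ q c r = 0 := by
    by_contra h'
    exact hr (hB.2.2.1 q c r p h' h)
  rw [this, zero_mul]

lemma beh_step (hB : B.Bideterministic) {q : B.Q} (h : B.ι q ≠ 0)
    (w : List Bool) : B.behaviour w = B.ι q * B.future w q := by
  refine Finset.sum_eq_single q (fun r _ hr => ?_) (by simp)
  have : B.ι r = 0 := by
    by_contra h'
    exact hr (hB.1 r q h' h)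
  rw [this, zero_mul]

lemma ex_step {x : S} {q : B.Q} {c : Bool} {w : List Bool} (h : x * B.future (c :: w) q ≠ 0) :
    ∃ p, B.σ q c p ≠ 0 ∧ x * B.σ q c p * B.future w p ≠ 0 := by
  change x * ∑ p : B.Q, B.σ q c p * B.future w p ≠ 0 at h
  rw [Finset.mul_sum] at h
  obtain ⟨p, _, hp⟩ := Finset.exists_ne_zero_of_sum_ne_zero h
  rw [← mul_assoc] at hp
  exact ⟨p, fun h0 => hp (by simp [h0]), hp⟩

lemma ex_init {w : List Bool} (h : B.behaviour w ≠ 0) :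
    ∃ p, B.ι p ≠ 0 ∧ B.ι p * B.future w p ≠ 0 := by
  obtain ⟨p, _, hp⟩ := Finset.exists_ne_zero_of_sum_ne_zero h
  exact ⟨p, fun h0 => hp (by simp [h0]), hp⟩

lemma five (hB : B.Bideterministic)
    (n1 : B.behaviour [false, true, false] ≠ 0) (n2 : B.behaviour [true, true] ≠ 0)
    (hz : ∀ w, w ≠ [false, true, false] → w ≠ [true, true] → B.behaviour w = 0) :
    5 ≤ B.states := by
  obtain ⟨q0, i0, e0⟩ := ex_init B n1
  obtain ⟨q1, i1, e1⟩ := ex_step B e0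
  obtain ⟨q2, i2, e2⟩ := ex_step B e1
  obtain ⟨q3, i3, e3⟩ := ex_step B e2
  obtain ⟨q0', j0, f0⟩ := ex_init B n2
  obtain rfl := hB.1 q0 q0' i0 j0
  obtain ⟨p, j1, f1⟩ := ex_step B f0
  obtain ⟨q3', j2, f2⟩ := ex_step B f1
  simp only [future] at e3 f2
  have t3 : B.τ q3 ≠ 0 := fun h => e3 (by simp [h])
  have t3' : B.τ q3' ≠ 0 := fun h => f2 (by simp [h])
  obtain rfl := hB.2.1 q3 q3' t3 t3'
  have b0 := beh_step B hB i0
  have s1 := fut_step B hB i1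
  have s2 := fut_step B hB i2
  have s3 := fut_step B hB i3
  have r1 := fut_step B hB j1
  have r2 := fut_step B hB j2
  have tt : ∀ q, B.future [] q = B.τ q := fun _ => rfl
  have d03 : q0 ≠ q3 := by
    rintro rfl
    have z := hz [] (by simp) (by simp)
    rw [b0, tt] at z
    apply e3
    have z' := congrArg (fun x => (B.σ q0 false q1 * B.σ q1 true q2 * B.σ q2 false q0) * x) z
    simp only [mul_zero] at z'
    rw [← z']
    ring
  have d02 : q0 ≠ q2 := by
    rintro rfl
    have z := hz [false] (by simp) (by simp)
    rw [b0, s3, tt] at z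
    apply e3
    have z' := congrArg (fun x => (B.σ q0 false q1 * B.σ q1 true q0) * x) z
    simp only [mul_zero] at z'
    rw [← z']
    ring
  have d01 : q0 ≠ q1 := by
    rintro rfl
    have z := hz [true, false] (by simp) (by simp)
    rw [b0, s2, s3, tt] at z
    apply e3
    have z' := congrArg (fun x => (B.σ q0 false q0) * x) z
    simp only [mul_zero] at z'
    rw [← z']
    ring
  have d12 : q1 ≠ q2 := by
    rintro rfl
    have z := hz [false, false] (by simp) (by simp)
    rw [b0, s1, s3, tt] at z
    apply e3
    have z' := congrArg (fun x => (B.σ q1 true q1) * x) z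
    simp only [mul_zero] at z'
    rw [← z']
    ring
  have d13 : q1 ≠ q3 := by
    rintro rfl
    have z := hz [false] (by simp) (by simp)
    rw [b0, s1, tt] at z
    apply e3
    have z' := congrArg (fun x => (B.σ q1 true q2 * B.σ q2 false q1) * x) z
    simp only [mul_zero] at z'
    rw [← z']
    ring
  have d23 : q2 ≠ q3 := by
    rintro rfl
    have z := hz [false, true] (by simp) (by simp)
    rw [b0, s1, s2, tt] at z
    apply e3
    have z' := congrArg (fun x => (B.σ q2 false q2) * x) z
    simp only [mul_zero] at z'
    rw [← z']
    ring
  have dp0 : p ≠ q0 := by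
    rintro rfl
    have z := hz [true] (by simp) (by simp)
    rw [b0, r2, tt] at z
    apply f2
    have z' := congrArg (fun x => (B.σ p true p) * x) z
    simp only [mul_zero] at z'
    rw [← z']
    ring
  have dp3 : p ≠ q3 := by
    rintro rfl
    have z := hz [true] (by simp) (by simp)
    rw [b0, r1, tt] at z
    apply f2
    have z' := congrArg (fun x => (B.σ p true p) * x) z
    simp only [mul_zero] at z'
    rw [← z']
    ring
  have dp1 : p ≠ q1 := by
    rintro rfl
    exact d23 (hB.2.2.1 _ _ _ _ i2 j2)
  have dp2 : p ≠ q2 := by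
    rintro rfl
    exact d01 (hB.2.2.2 _ _ _ _ j1 i2)
  classical
  have hc : ({q0, q1, q2, q3, p} : Finset B.Q).card = 5 := by
    rw [Finset.card_insert_of_notMem, Finset.card_insert_of_notMem,
      Finset.card_insert_of_notMem, Finset.card_insert_of_notMem, Finset.card_singleton] <;>
    simp [d01, d02, d03, d12, d13, d23, dp0.symm, dp1.symm, dp2.symm, dp3.symm]
  rw [← hc]
  exact Finset.card_le_univ _
end

end FiveStateAux

/-- Over a commutative semiring with elements `s, t, s', t'` such that
`s*t ≠ 0 ≠ s'*t'` and `s*t' = 0 = s'*t`, the series over the two-letter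
alphabet `Bool` (with letters `a = false` and `b = true`) sending `aba` to
`s*t`, `bb` to `s'*t'` and every other word to `0` is realised by a weighted
automaton with exactly `4` states, while every bideterministic weighted
automaton realising it has at least `5` states. -/
theorem four_state_realisable_but_bideterministic_needs_five
    {S : Type} [CommSemiring S] (s t s' t' : S)
    (h1 : s * t ≠ 0) (h2 : s' * t' ≠ 0) (h3 : s * t' = 0) (h4 : s' * t = 0) :
    (∃ A : WeightedAutomaton S Bool, A.states = 4 ∧
        A.behaviour = fun w =>
          if w = [false, true, false] then s * t
          else if w = [true, true] then s' * t' else 0) ∧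
    (∀ B : WeightedAutomaton S Bool, B.Bideterministic →
        (B.behaviour = fun w =>
          if w = [false, true, false] then s * t
          else if w = [true, true] then s' * t' else 0) →
        5 ≤ B.states) := by
  refine ⟨⟨FiveStateAux.aut s t s' t', ?_, ?_⟩, ?_⟩
  · exact Fintype.card_fin 4
  · funext w
    exact FiveStateAux.aut_behaviour s t s' t' h3 h4 w
  · intro B hB hb
    apply FiveStateAux.five B hB
    · rw [hb]; simpa using h1
    · rw [hb]; simpa using h2
    · intro w hw1 hw2
      rw [hb]; simp [hw1, hw2]
end

section
/- Let S be a commutative semiring with elements u, v ∈ S such that u·v = 0, u² ≠ 0, and v² ≠ 0. Then there is a trim bideterministic weighted automaton A over S and a two-letter alphabet such that no minimal weighted automaton over S whose behaviour equals ‖A‖ is bideterministic. -/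
namespace WeightedAutomaton

/-- The four-state trim bideterministic automaton. States `0`, `1` are swapped by `false`;
`true` goes `0 → 2 → 0` with weights `u` and `1 → 3 → 1` with weights `v`. -/
def bigAut {S : Type} [CommSemiring S] (u v : S) : WeightedAutomaton S Bool where
  Q := Fin 4
  σ := fun p c q => match c with
    | false => !![0, 1, 0, 0; 1, 0, 0, 0; 0, 0, 0, 0; 0, 0, 0, 0] p q
    | true => !![0, 0, u, 0; 0, 0, 0, v; u, 0, 0, 0; 0, v, 0, 0] p q
  ι := ![1, 0, 0, 0]
  τ := ![1, 0, 0, 0]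

/-- The automaton obtained by merging states `2` and `3`. -/
def smallAut {S : Type} [CommSemiring S] (u v : S) : WeightedAutomaton S Bool where
  Q := Fin 3
  σ := fun p c q => match c with
    | false => !![0, 1, 0; 1, 0, 0; 0, 0, 0] p q
    | true => !![0, 0, u; 0, 0, v; u, v, 0] p q
  ι := ![1, 0, 0]
  τ := ![1, 0, 0]

section
variable {S : Type} [CommSemiring S] (u v : S)

lemma big_nil (q : Fin 4) : (bigAut u v).future [] q = (![1, 0, 0, 0] : Fin 4 → S) q := rfl

lemma big_cons (c : Bool) (w : List Bool) (q : Fin 4) :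
    (bigAut u v).future (c :: w) q =
      ∑ p : Fin 4, (bigAut u v).σ q c p * (bigAut u v).future w p := rfl

lemma big_f0 (w : List Bool) : (bigAut u v).future (false :: w) (0 : Fin 4) =
    (bigAut u v).future w (1 : Fin 4) := by
  rw [big_cons]; simp [Fin.sum_univ_four, bigAut]
lemma big_f1 (w : List Bool) : (bigAut u v).future (false :: w) (1 : Fin 4) =
    (bigAut u v).future w (0 : Fin 4) := by
  rw [big_cons]; simp [Fin.sum_univ_four, bigAut]
lemma big_f2 (w : List Bool) : (bigAut u v).future (false :: w) (2 : Fin 4) = 0 := by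
  rw [big_cons]; simp [Fin.sum_univ_four, bigAut]
lemma big_f3 (w : List Bool) : (bigAut u v).future (false :: w) (3 : Fin 4) = 0 := by
  rw [big_cons]; simp [Fin.sum_univ_four, bigAut]
lemma big_t0 (w : List Bool) : (bigAut u v).future (true :: w) (0 : Fin 4) =
    u * (bigAut u v).future w (2 : Fin 4) := by
  rw [big_cons]; simp [Fin.sum_univ_four, bigAut]
lemma big_t1 (w : List Bool) : (bigAut u v).future (true :: w) (1 : Fin 4) =
    v * (bigAut u v).future w (3 : Fin 4) := by
  rw [big_cons]; simp [Fin.sum_univ_four, bigAut]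
lemma big_t2 (w : List Bool) : (bigAut u v).future (true :: w) (2 : Fin 4) =
    u * (bigAut u v).future w (0 : Fin 4) := by
  rw [big_cons]; simp [Fin.sum_univ_four, bigAut]
lemma big_t3 (w : List Bool) : (bigAut u v).future (true :: w) (3 : Fin 4) =
    v * (bigAut u v).future w (1 : Fin 4) := by
  rw [big_cons]; simp [Fin.sum_univ_four, bigAut]

lemma big_behaviour (w : List Bool) :
    (bigAut u v).behaviour w = (bigAut u v).future w (0 : Fin 4) := by
  have : (bigAut u v).behaviour w =
    ∑ q : Fin 4, (![1, 0, 0, 0] : Fin 4 → S) q * (bigAut u v).future w q := rfl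
  rw [this]; simp [Fin.sum_univ_four]

lemma small_cons (c : Bool) (w : List Bool) (q : Fin 3) :
    (smallAut u v).future (c :: w) q =
      ∑ p : Fin 3, (smallAut u v).σ q c p * (smallAut u v).future w p := rfl

lemma small_behaviour (w : List Bool) :
    (smallAut u v).behaviour w = (smallAut u v).future w (0 : Fin 3) := by
  have : (smallAut u v).behaviour w =
    ∑ q : Fin 3, (![1, 0, 0] : Fin 3 → S) q * (smallAut u v).future w q := rfl
  rw [this]; simp [Fin.sum_univ_three]

lemma small_big (huv : u * v = 0) (w : List Bool) :
    (smallAut u v).future w (0 : Fin 3) = (bigAut u v).future w (0 : Fin 4) ∧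
    (smallAut u v).future w (1 : Fin 3) = (bigAut u v).future w (1 : Fin 4) ∧
    (smallAut u v).future w (2 : Fin 3) =
      (bigAut u v).future w (2 : Fin 4) + (bigAut u v).future w (3 : Fin 4) ∧
    u * (bigAut u v).future w (3 : Fin 4) = 0 ∧
    v * (bigAut u v).future w (2 : Fin 4) = 0 := by
  have hvu : v * u = 0 := by rw [mul_comm]; exact huv
  induction w with
  | nil => simp [future, smallAut, bigAut]
  | cons c w ih =>
    obtain ⟨h0, h1, h2, h3, h4⟩ := ih
    cases c
    · rw [big_f0, big_f1, big_f2, big_f3, small_cons, small_cons, small_cons, ← h0, ← h1]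
      simp [Fin.sum_univ_three, smallAut]
    · rw [big_t0, big_t1, big_t2, big_t3, small_cons, small_cons, small_cons,
        Fin.sum_univ_three, Fin.sum_univ_three, Fin.sum_univ_three, h0, h1, h2,
        ← mul_assoc, ← mul_assoc, huv, hvu]
      simp [smallAut, mul_add, h3, h4]

lemma small_behaviour_eq (huv : u * v = 0) :
    (smallAut u v).behaviour = (bigAut u v).behaviour := by
  funext w
  rw [small_behaviour, big_behaviour, (small_big u v huv w).1]

lemma big_trim (h1 : (1 : S) ≠ 0) (hu : u ≠ 0) (hv : v ≠ 0) : (bigAut u v).Trim := by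
  have e : ∀ q : Fin 4, (bigAut u v).Accessible q ∧ (bigAut u v).Coaccessible q := by
    intro q
    fin_cases q
    · exact ⟨⟨(0 : Fin 4), [], by simpa [bigAut] using h1, trivial, rfl⟩,
        ⟨[], trivial, by simpa [bigAut, pathEnd] using h1⟩⟩
    · exact ⟨⟨(0 : Fin 4), [(false, (1 : Fin 4))], by simpa [bigAut] using h1,
          by simpa [bigAut, IsPath] using h1, rfl⟩,
        ⟨[(false, (0 : Fin 4))], by simpa [bigAut, IsPath] using h1,
          by simpa [bigAut, pathEnd] using h1⟩⟩
    · exact ⟨⟨(0 : Fin 4), [(true, (2 : Fin 4))], by simpa [bigAut] using h1,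
          by simpa [bigAut, IsPath] using hu, rfl⟩,
        ⟨[(true, (0 : Fin 4))], by simpa [bigAut, IsPath] using hu,
          by simpa [bigAut, pathEnd] using h1⟩⟩
    · exact ⟨⟨(0 : Fin 4), [(false, (1 : Fin 4)), (true, (3 : Fin 4))],
          by simpa [bigAut] using h1,
          by simpa [bigAut, IsPath] using And.intro h1 hv, rfl⟩,
        ⟨[(true, (1 : Fin 4)), (false, (0 : Fin 4))],
          by simpa [bigAut, IsPath] using And.intro hv h1,
          by simpa [bigAut, pathEnd] using h1⟩⟩
  exact e

lemma big_bidet : (bigAut u v).Bideterministic := by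
  refine ⟨?_, ?_, ?_, ?_⟩
  · change ∀ p q : Fin 4, _
    intro p q
    fin_cases p <;> fin_cases q <;> simp [bigAut]
  · change ∀ p q : Fin 4, _
    intro p q
    fin_cases p <;> fin_cases q <;> simp [bigAut]
  · change ∀ (p : Fin 4) (c : Bool) (q q' : Fin 4), _
    intro p c q q'
    cases c <;> fin_cases p <;> fin_cases q <;> fin_cases q' <;> simp [bigAut]
  · change ∀ (p p' : Fin 4) (c : Bool) (q : Fin 4), _
    intro p p' c q
    cases c <;> fin_cases p <;> fin_cases q <;> fin_cases p' <;> simp [bigAut]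

lemma bidet_step (B : WeightedAutomaton S Bool) (hB : B.Bideterministic) (c : Bool)
    (w : List Bool) (q : B.Q) (h : B.future (c :: w) q ≠ 0) :
    ∃ p, B.σ q c p ≠ 0 ∧ B.future w p ≠ 0 ∧
      ∀ w', B.future (c :: w') q = B.σ q c p * B.future w' p := by
  obtain ⟨p, -, hp⟩ := Finset.exists_ne_zero_of_sum_ne_zero h
  refine ⟨p, left_ne_zero_of_mul hp, right_ne_zero_of_mul hp, fun w' => ?_⟩
  refine Finset.sum_eq_single p (fun r _ hr => ?_) (fun h => absurd (Finset.mem_univ _) h)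
  by_contra hne
  exact hr (hB.2.2.1 q c r p (left_ne_zero_of_mul hne) (left_ne_zero_of_mul hp))

lemma bidet_card (B : WeightedAutomaton S Bool) (hB : B.Bideterministic)
    (hu : u * u ≠ 0) (hv : v * v ≠ 0)
    (hb : B.behaviour = (bigAut u v).behaviour) : 4 ≤ B.states := by
  have h1 : (1 : S) ≠ 0 := fun h => hu (by rw [← mul_one (u * u), h, mul_zero])
  have hb' : ∀ w, B.behaviour w = (bigAut u v).future w (0 : Fin 4) := fun w => by
    rw [hb, big_behaviour]
  have bnil : B.behaviour [] = 1 := by rw [hb', big_nil]; rfl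
  obtain ⟨i, -, hi⟩ := Finset.exists_ne_zero_of_sum_ne_zero (bnil.trans_ne h1)
  have hβ : ∀ w, B.ι i * B.future w i = (bigAut u v).future w (0 : Fin 4) := fun w => by
    rw [← hb']
    symm
    refine Finset.sum_eq_single i (fun r _ hr => ?_) (fun h => absurd (Finset.mem_univ _) h)
    by_contra hne
    exact hr (hB.1 r i (left_ne_zero_of_mul hne) (left_ne_zero_of_mul hi))
  have hτ : ∀ j, B.future [] j ≠ 0 → j = i := fun j hj =>
    hB.2.1 j i hj (right_ne_zero_of_mul hi)
  have e0 := hβ []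
  have ea := hβ [false]
  have eb := hβ [true]
  have eaa := hβ [false, false]
  have eba := hβ [true, false]
  have eab := hβ [false, true]
  have ebb := hβ [true, true]
  have eaba := hβ [false, true, false]
  have eabba := hβ [false, true, true, false]
  simp only [big_f0, big_f1, big_f2, big_f3, big_t0, big_t1, big_t2, big_t3, big_nil,
    Matrix.cons_val, mul_zero, mul_one] at e0 ea eb eaa eba eab ebb eaba eabba
  obtain ⟨p, hx, hp, fp⟩ := bidet_step B hB false [false] i
    (right_ne_zero_of_mul (eaa.trans_ne h1))
  obtain ⟨j, hy, hj, -⟩ := bidet_step B hB false [] p hp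
  obtain rfl := hτ j hj
  obtain ⟨q, hu1, hq, fq⟩ := bidet_step B hB true [true] j
    (right_ne_zero_of_mul (ebb.trans_ne hu))
  obtain ⟨k, hu2, hk, -⟩ := bidet_step B hB true [] q hq
  obtain rfl := hτ k hk
  have habba := right_ne_zero_of_mul (eabba.trans_ne hv)
  rw [fp] at habba
  obtain ⟨r, hv1, hr, fr⟩ := bidet_step B hB true [true, false] p
    (right_ne_zero_of_mul habba)
  obtain ⟨l, hv2, hl, -⟩ := bidet_step B hB true [false] r hr
  obtain ⟨m, hz, hm, -⟩ := bidet_step B hB false [] l hl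
  obtain rfl := hτ m hm
  obtain rfl := hB.2.2.2 l p false m hz hy
  rw [fp] at ea eaa eab eaba eabba
  rw [fq] at eb eba
  rw [fr] at eab eaba eabba
  have n1 : m ≠ l := by
    intro h
    apply hx
    rw [← h] at ea
    calc _ = B.σ m false l * (B.ι m * B.future [] m) := by rw [e0, mul_one]
      _ = B.ι m * (B.σ m false l * B.future [] m) := by ring
      _ = 0 := by rw [← h]; exact ea
  have n2 : m ≠ q := by
    intro h
    apply hu1
    calc _ = B.σ m true q * (B.ι m * B.future [] m) := by rw [e0, mul_one]
      _ = B.ι m * (B.σ m true q * B.future [] m) := by ring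
      _ = B.ι m * (B.σ m true q * B.future [] q) := by rw [← h]
      _ = 0 := eb
  have n3 : l ≠ q := by
    intro h
    apply hu1
    calc _ = B.σ m true q * (B.ι m * (B.σ m false l * B.future [false] l)) := by
          rw [eaa, mul_one]
      _ = B.σ m false l * (B.ι m * (B.σ m true q * B.future [false] l)) := by ring
      _ = B.σ m false l * (B.ι m * (B.σ m true q * B.future [false] q)) := by rw [← h]
      _ = 0 := by rw [eba, mul_zero]
  have n4 : m ≠ r := by
    intro h
    apply hv
    have key : B.σ m false l * B.σ l true r = 0 := by
      calc _ = (B.σ m false l * B.σ l true r) * (B.ι m * B.future [] m) := by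
            rw [e0, mul_one]
        _ = B.ι m * (B.σ m false l * (B.σ l true r * B.future [] m)) := by ring
        _ = B.ι m * (B.σ m false l * (B.σ l true r * B.future [] r)) := by rw [← h]
        _ = 0 := eab
    rw [← eabba, ← mul_assoc (B.σ m false l), key, zero_mul, mul_zero]
  have n5 : l ≠ r := by
    intro h
    apply hv1
    calc _ = B.σ l true r * (B.ι m * (B.σ m false l * B.future [false] l)) := by
          rw [eaa, mul_one]
      _ = B.ι m * (B.σ m false l * (B.σ l true r * B.future [false] l)) := by ring
      _ = B.ι m * (B.σ m false l * (B.σ l true r * B.future [false] r)) := by rw [← h]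
      _ = 0 := eaba
  have n6 : q ≠ r := by
    intro h
    rw [← h] at hv2
    exact n1 (hB.2.2.1 q true m l hu2 hv2)
  classical
  have hc : ({m, l, q, r} : Finset B.Q).card = 4 := by
    rw [Finset.card_insert_of_notMem, Finset.card_insert_of_notMem,
      Finset.card_insert_of_notMem, Finset.card_singleton]
    all_goals simp [n1, n2, n3, n4, n5, n6]
  rw [← hc]
  exact Finset.card_le_univ _

end

end WeightedAutomaton

/-- Over a commutative semiring with elements `u, v` such that `u*v = 0` and
`u² ≠ 0 ≠ v²`, there is a trim bideterministic weighted automaton over a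
two-letter alphabet none of whose equivalent minimal automata is
bideterministic. -/
theorem exists_trim_bideterministic_no_minimal_bideterministic_of_sq_ne_zero
    {S : Type} [CommSemiring S] (u v : S)
    (huv : u * v = 0) (hu : u * u ≠ 0) (hv : v * v ≠ 0) :
    ∃ A : WeightedAutomaton S Bool, A.Trim ∧ A.Bideterministic ∧
      ∀ B : WeightedAutomaton S Bool,
        B.behaviour = A.behaviour → B.Minimal → ¬ B.Bideterministic := by
  have h1 : (1 : S) ≠ 0 := fun h => hu (by rw [← mul_one (u * u), h, mul_zero])
  refine ⟨WeightedAutomaton.bigAut u v,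
    WeightedAutomaton.big_trim u v h1 (left_ne_zero_of_mul hu) (left_ne_zero_of_mul hv),
    WeightedAutomaton.big_bidet u v, fun B hB hmin hbi => ?_⟩
  have h4 := WeightedAutomaton.bidet_card u v B hbi hu hv hB
  have h3 := hmin (WeightedAutomaton.smallAut u v)
    ((WeightedAutomaton.small_behaviour_eq u v huv).trans hB.symm)
  have : (WeightedAutomaton.smallAut u v).states = 3 := Fintype.card_fin 3
  omega
end

section
/- Let S be a commutative semiring such that for every alphabet Σ and every bideterministic weighted automaton A over S and Σ, there exists a minimal weighted automaton over S with behaviour ‖A‖ that is bideterministic. Then the set Z(S) = {a ∈ S : there exists b ∈ S with b ≠ 0 and a·b = 0} of zero divisors of S is closed under addition; consequently, Z(S) is an ideal of S. -/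
/-- The set of zero divisors of a commutative semiring `S`. -/
def zeroDivisorSet (S : Type) [CommSemiring S] : Set S :=
  {a : S | ∃ b : S, b ≠ 0 ∧ a * b = 0}

namespace WeightedAutomaton

/-- Five-state bideterministic automaton (letters u=0, v=1, w=2, x=3, y=4;
states start=0, p=1, q=2, q1=3, end=4). -/
def exA {S : Type} [CommSemiring S] (a b aa bb : S) : WeightedAutomaton S (Fin 5) where
  Q := Fin 5
  σ := ![![![0,bb,0,0,0],![0,0,0,0,0],![0,0,aa,0,0],![0,0,0,0,0],![0,0,0,0,0]],
         ![![0,0,0,0,0],![0,0,0,0,a],![0,0,0,0,0],![0,a,0,0,0],![0,0,0,0,0]],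
         ![![0,0,0,0,0],![0,0,0,0,0],![0,0,0,0,0],![0,0,0,b,0],![0,0,0,0,0]],
         ![![0,0,0,0,0],![0,0,0,0,0],![0,0,0,0,0],![0,0,0,0,0],![0,0,0,0,1]],
         ![![0,0,0,0,0],![0,0,0,0,0],![0,0,0,0,0],![0,0,0,0,0],![0,0,0,0,0]]]
  ι := ![1,0,0,0,0]
  τ := ![0,0,0,0,1]

/-- Equivalent four-state automaton (states start=0, p=q=1, q1=2, end=3). -/
def exC {S : Type} [CommSemiring S] (a b aa bb : S) : WeightedAutomaton S (Fin 5) where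
  Q := Fin 4
  σ := ![![![0,bb,0,0],![0,0,0,0],![0,aa,0,0],![0,0,0,0],![0,0,0,0]],
         ![![0,0,0,0],![0,0,0,a],![0,0,0,0],![0,a,b,0],![0,0,0,0]],
         ![![0,0,0,0],![0,0,0,0],![0,0,0,0],![0,0,0,0],![0,0,0,1]],
         ![![0,0,0,0],![0,0,0,0],![0,0,0,0],![0,0,0,0],![0,0,0,0]]]
  ι := ![1,0,0,0]
  τ := ![0,0,0,1]

section ex
variable {S : Type} [CommSemiring S] (a b aa bb : S)

/-- Futures of `exA` as functions on `Fin 5`. -/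
def FA (w : List (Fin 5)) (q : Fin 5) : S := (exA a b aa bb).future w q

/-- Futures of `exC` as functions on `Fin 4`. -/
def FC (w : List (Fin 5)) (q : Fin 4) : S := (exC a b aa bb).future w q

lemma FA_nil (q : Fin 5) : FA a b aa bb [] q = (![0,0,0,0,1] : Fin 5 → S) q := rfl
lemma FC_nil (q : Fin 4) : FC a b aa bb [] q = (![0,0,0,1] : Fin 4 → S) q := rfl
lemma FA_cons (c : Fin 5) (w : List (Fin 5)) (q : Fin 5) : FA a b aa bb (c :: w) q =
    ∑ p : Fin 5, ((exA a b aa bb).σ : Fin 5 → Fin 5 → Fin 5 → S) q c p * FA a b aa bb w p := rfl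
lemma FC_cons (c : Fin 5) (w : List (Fin 5)) (q : Fin 4) : FC a b aa bb (c :: w) q =
    ∑ p : Fin 4, ((exC a b aa bb).σ : Fin 4 → Fin 5 → Fin 4 → S) q c p * FC a b aa bb w p := rfl
lemma behA (w : List (Fin 5)) : (exA a b aa bb).behaviour w = FA a b aa bb w 0 := by
  have : (exA a b aa bb).behaviour w =
    ∑ q : Fin 5, (![1,0,0,0,0] : Fin 5 → S) q * FA a b aa bb w q := rfl
  rw [this]; simp [Fin.sum_univ_succ]
lemma behC (w : List (Fin 5)) : (exC a b aa bb).behaviour w = FC a b aa bb w 0 := by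
  have : (exC a b aa bb).behaviour w =
    ∑ q : Fin 4, (![1,0,0,0] : Fin 4 → S) q * FC a b aa bb w q := rfl
  rw [this]; simp [Fin.sum_univ_succ]

lemma exA_bidet : (exA a b aa bb).Bideterministic := by
  refine ⟨?_, ?_, ?_, ?_⟩
  · change ∀ p q : Fin 5, _
    intro p q; fin_cases p <;> fin_cases q <;> simp [exA]
  · change ∀ p q : Fin 5, _
    intro p q; fin_cases p <;> fin_cases q <;> simp [exA]
  · change ∀ (p c q qx : Fin 5), _
    intro p c q qx
    fin_cases p <;> fin_cases c <;> fin_cases q <;> first | (simp [exA]; done) | (fin_cases qx <;> simp [exA])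
  · change ∀ (p px c q : Fin 5), _
    intro p px c q
    fin_cases p <;> fin_cases c <;> fin_cases q <;> first | (simp [exA]; done) | (fin_cases px <;> simp [exA])

lemma beh_eq (ha : a * aa = 0) (hb : b * bb = 0) :
    (exC a b aa bb).behaviour = (exA a b aa bb).behaviour := by
  have hax : aa * a = 0 := by rw [mul_comm, ha]
  have hbx : bb * b = 0 := by rw [mul_comm, hb]
  have key : ∀ w : List (Fin 5),
      FA a b aa bb w 4 = FC a b aa bb w 3 ∧ FA a b aa bb w 3 = FC a b aa bb w 2 ∧
      bb * FA a b aa bb w 1 = bb * FC a b aa bb w 1 ∧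
      aa * FA a b aa bb w 2 = aa * FC a b aa bb w 1 ∧
      FA a b aa bb w 0 = FC a b aa bb w 0 := by
    intro w
    induction w with
    | nil => simp [FA_nil, FC_nil]
    | cons c w ih =>
      obtain ⟨h4, h3, h1, h2, h0⟩ := ih
      have e1 : bb * (a * FA a b aa bb w 1) = bb * (a * FC a b aa bb w 1) := by
        rw [mul_left_comm, h1, mul_left_comm]
      simp only [FA_cons, FC_cons]
      fin_cases c <;>
        simp [exA, exC, Fin.sum_univ_succ, mul_add, ← mul_assoc, hax, hbx, h4, h3, h1, h2]
      simpa [mul_assoc] using e1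
  funext w
  rw [behA, behC, (key w).2.2.2.2]

end ex

lemma future_ne {S : Type} [Semiring S] {α : Type} (B : WeightedAutomaton S α)
    (c : α) (w : List α) (q : B.Q) (h : B.future (c :: w) q ≠ 0) :
    ∃ p, B.σ q c p ≠ 0 ∧ B.future w p ≠ 0 := by
  obtain ⟨p, -, hp⟩ := Finset.exists_ne_zero_of_sum_ne_zero h
  exact ⟨p, left_ne_zero_of_mul hp, right_ne_zero_of_mul hp⟩

lemma beh_ne {S : Type} [Semiring S] {α : Type} (B : WeightedAutomaton S α)
    (w : List α) (h : B.behaviour w ≠ 0) :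
    ∃ p, B.ι p ≠ 0 ∧ B.future w p ≠ 0 := by
  obtain ⟨p, -, hp⟩ := Finset.exists_ne_zero_of_sum_ne_zero h
  exact ⟨p, left_ne_zero_of_mul hp, right_ne_zero_of_mul hp⟩

lemma future_step {S : Type} [Semiring S] {α : Type} (B : WeightedAutomaton S α)
    (hB : B.Bideterministic) (c : α) (w : List α) (q p : B.Q) (h : B.σ q c p ≠ 0) :
    B.future (c :: w) q = B.σ q c p * B.future w p := by
  refine Finset.sum_eq_single p (fun r _ hr => ?_) (by simp)
  by_contra hx
  exact hr (hB.2.2.1 q c r p (left_ne_zero_of_mul hx) h)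

lemma beh_step {S : Type} [Semiring S] {α : Type} (B : WeightedAutomaton S α)
    (hB : B.Bideterministic) (w : List α) (p : B.Q) (h : B.ι p ≠ 0) :
    B.behaviour w = B.ι p * B.future w p := by
  refine Finset.sum_eq_single p (fun r _ hr => ?_) (by simp)
  by_contra hx
  exact hr (hB.1 r p (left_ne_zero_of_mul hx) h)

lemma five_le {S : Type} [CommSemiring S] {α : Type} (B : WeightedAutomaton S α)
    (hB : B.Bideterministic) (u v w x y : α)
    (n1 : B.behaviour [u, v] ≠ 0) (n2 : B.behaviour [u, x, v] ≠ 0)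
    (n3 : B.behaviour [w, x, y] ≠ 0)
    (z0 : B.behaviour [] = 0) (zv : B.behaviour [v] = 0) (zu : B.behaviour [u] = 0)
    (zwy : B.behaviour [w, y] = 0) (zxy : B.behaviour [x, y] = 0) (zw : B.behaviour [w] = 0)
    (zy : B.behaviour [y] = 0) (zwx : B.behaviour [w, x] = 0) : 5 ≤ B.states := by
  obtain ⟨i, hi, f1⟩ := beh_ne B _ n1
  obtain ⟨p, hp, f2⟩ := future_ne B _ _ _ f1
  obtain ⟨t, ht, f3⟩ := future_ne B _ _ _ f2
  obtain ⟨i2, hi2, g1⟩ := beh_ne B _ n2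
  obtain ⟨p2, hp2, g2⟩ := future_ne B _ _ _ g1
  obtain ⟨p3, hp3, g3⟩ := future_ne B _ _ _ g2
  obtain ⟨t2, ht2, g4⟩ := future_ne B _ _ _ g3
  obtain ⟨i3, hi3, k1⟩ := beh_ne B _ n3
  obtain ⟨q, hq, k2⟩ := future_ne B _ _ _ k1
  obtain ⟨q1, hq1, k3⟩ := future_ne B _ _ _ k2
  obtain ⟨t3, ht3, k4⟩ := future_ne B _ _ _ k3
  obtain rfl := hB.1 _ _ hi hi2
  obtain rfl := hB.1 _ _ hi hi3
  obtain rfl := hB.2.1 _ _ f3 g4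
  obtain rfl := hB.2.1 _ _ f3 k4
  obtain rfl := hB.2.2.1 _ _ _ _ hp hp2
  obtain rfl := hB.2.2.2 _ _ _ _ ht ht2
  have F0 : ∀ r, B.future [] r = B.τ r := fun _ => rfl
  have bs := fun l => beh_step B hB l i hi
  have fs := fun c l q p h => future_step B hB c l q p h
  rw [bs, fs _ _ _ _ hp, fs _ _ _ _ ht, F0] at n1
  rw [bs, fs _ _ _ _ hq, fs _ _ _ _ hq1, fs _ _ _ _ ht3, F0] at n3
  rw [bs] at z0 zv zu zwy zxy zw zy zwx
  rw [fs _ _ _ _ hp] at zu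
  rw [fs _ _ _ _ hq] at zwy zw zwx
  rw [fs _ _ _ _ hq1] at zwx
  rw [F0] at z0 zu zw zwx
  have d1 : i ≠ p := by
    rintro rfl
    rw [fs _ _ _ _ ht, F0] at zv
    exact n1 (by rw [mul_left_comm, zv, mul_zero])
  have d2 : p ≠ t := by
    rintro rfl
    apply n1
    calc _ = B.σ p v p * (B.ι i * (B.σ i u p * B.τ p)) := by ring
      _ = 0 := by rw [zu, mul_zero]
  have d3 : q ≠ q1 := by
    rintro rfl
    rw [fs _ _ _ _ ht3, F0] at zwy
    apply n3
    calc _ = B.σ q x q * (B.ι i * (B.σ i w q * (B.σ q y t * B.τ t))) := by ring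
      _ = 0 := by rw [zwy, mul_zero]
  have d4 : q ≠ p := by
    rintro rfl
    exact d3 (hB.2.2.1 _ _ _ _ hp3 hq1)
  have d5 : q1 ≠ p := by
    rintro rfl
    exact d4 (hB.2.2.2 _ _ _ _ hq1 hp3)
  have d6 : q ≠ i := by
    rintro rfl
    rw [fs _ _ _ _ hq1, fs _ _ _ _ ht3, F0] at zxy
    exact n3 (by rw [mul_left_comm, zxy, mul_zero])
  have d7 : q ≠ t := by
    rintro rfl
    apply n3
    calc _ = B.σ q x q1 * B.σ q1 y q * (B.ι i * (B.σ i w q * B.τ q)) := by ring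
      _ = 0 := by rw [zw, mul_zero]
  have d8 : q1 ≠ i := by
    rintro rfl
    rw [fs _ _ _ _ ht3, F0] at zy
    apply n3
    calc _ = B.σ q1 w q * B.σ q x q1 * (B.ι q1 * (B.σ q1 y t * B.τ t)) := by ring
      _ = 0 := by rw [zy, mul_zero]
  have d9 : q1 ≠ t := by
    rintro rfl
    apply n3
    calc _ = B.σ q1 y q1 * (B.ι i * (B.σ i w q * (B.σ q x q1 * B.τ q1))) := by ring
      _ = 0 := by rw [zwx, mul_zero]
  have d10 : i ≠ t := by
    rintro rfl
    apply n1
    calc _ = B.σ i u p * B.σ p v i * (B.ι i * B.τ i) := by ring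
      _ = 0 := by rw [z0, mul_zero]
  classical
  have : ({i, p, q, q1, t} : Finset B.Q).card = 5 := by
    rw [Finset.card_insert_of_notMem, Finset.card_insert_of_notMem,
      Finset.card_insert_of_notMem, Finset.card_pair d9]
    · simp [d3, d7]
    · simp [d4.symm, d5.symm, d2]
    · simp [d1, d6.symm, d8.symm, d10]
  rw [← this]
  exact Finset.card_le_univ _

end WeightedAutomaton

/-- If over a commutative semiring `S` every bideterministic weighted automaton
admits an equivalent minimal automaton that is bideterministic, then the set of
zero divisors of `S` is closed under addition; together with its (obvious)
closedness under multiplication by arbitrary elements, this makes it an ideal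
of `S`. -/
theorem zeroDivisorSet_add_closed_of_bideterministic_minimal
    {S : Type} [CommSemiring S]
    (h : ∀ (α : Type) (_ : Fintype α) (_ : Nonempty α)
        (A : WeightedAutomaton S α), A.Bideterministic →
        ∃ B : WeightedAutomaton S α,
          B.behaviour = A.behaviour ∧ B.Minimal ∧ B.Bideterministic) :
    (∀ a b : S, a ∈ zeroDivisorSet S → b ∈ zeroDivisorSet S →
        a + b ∈ zeroDivisorSet S) ∧
    (∀ s a : S, a ∈ zeroDivisorSet S → s * a ∈ zeroDivisorSet S) := by
  refine ⟨?_, ?_⟩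
  · rintro a b ⟨aa, ha0, ha⟩ ⟨bb, hb0, hb⟩
    by_contra hs
    have reg : ∀ c : S, (a + b) * c = 0 → c = 0 := by
      intro c hc
      by_contra hc0
      exact hs ⟨c, hc0, hc⟩
    have hba : bb * a ≠ 0 := by
      intro h0
      apply hb0
      apply reg
      rw [add_mul, hb, mul_comm a, h0, add_zero]
    have hbaa : bb * (a * a) ≠ 0 := by
      intro h0
      apply hba
      apply reg
      calc (a + b) * (bb * a) = bb * (a * a) + (b * bb) * a := by ring
        _ = 0 := by rw [h0, hb]; simp
    have hab : aa * b ≠ 0 := by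
      intro h0
      apply ha0
      apply reg
      rw [add_mul, ha, mul_comm b, h0, add_zero]
    obtain ⟨B, hBA, hmin, hdet⟩ := h (Fin 5) inferInstance inferInstance
      (WeightedAutomaton.exA a b aa bb) (WeightedAutomaton.exA_bidet a b aa bb)
    have h4 : B.states ≤ 4 := by
      have := hmin (WeightedAutomaton.exC a b aa bb)
        ((WeightedAutomaton.beh_eq a b aa bb ha hb).trans hBA.symm)
      have e : (WeightedAutomaton.exC a b aa bb).states = 4 := Fintype.card_fin 4
      omega
    have h5 : 5 ≤ B.states := by
      apply WeightedAutomaton.five_le B hdet 0 1 2 3 4 <;>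
        rw [hBA, WeightedAutomaton.behA] <;>
        simp [WeightedAutomaton.FA_cons, WeightedAutomaton.FA_nil, WeightedAutomaton.exA,
          Fin.sum_univ_succ, hba, hbaa, hab]
    omega
  · rintro s a ⟨b, hb, hab⟩
    exact ⟨b, hb, by rw [mul_assoc, hab, mul_zero]⟩
end

section
/- Let p be a prime, let k, n be positive integers, and let v₁, …, v_{n−1} be vectors in (ℤ/p^kℤ)ⁿ. Then there exists an index j ∈ {1, …, n} such that there are no a₁, …, a_{n−1} ∈ ℤ/p^kℤ and b ∈ ℤ/p^kℤ with b ≠ 0 satisfying a₁·v₁ + ⋯ + a_{n−1}·v_{n−1} = b·e_j, where e_j ∈ (ℤ/p^kℤ)ⁿ is the vector with j-th entry 1 and all other entries 0. Equivalently, some nonzero multiple of no standard basis vector other than e_j is relevant: no nonzero scalar multiple of e_j lies in the submodule of (ℤ/p^kℤ)ⁿ generated by v₁, …, v_{n−1}. -/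
theorem aux_scale (p k : ℕ) (hp : p.Prime) (hk : 0 < k) (b : ZMod (p ^ k)) (hb : b ≠ 0) :
    ∃ c : ZMod (p ^ k), c * b = ((p ^ (k - 1) : ℕ) : ZMod (p ^ k)) := by
  have : NeZero (p ^ k) := ⟨pow_ne_zero _ hp.ne_zero⟩
  have hv : b.val ≠ 0 := by rwa [Ne, ZMod.val_eq_zero]
  obtain ⟨m, u, hu, h⟩ := Nat.exists_eq_pow_mul_and_not_dvd hv p hp.ne_one
  have hmk : m < k := by
    have h1 : p ^ m ≤ b.val := Nat.le_of_dvd (Nat.pos_of_ne_zero hv) ⟨u, h⟩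
    exact (Nat.pow_lt_pow_iff_right hp.one_lt).1 (lt_of_le_of_lt h1 (ZMod.val_lt b))
  have hc : u.Coprime (p ^ k) := (((Nat.Prime.coprime_iff_not_dvd hp).2 hu).symm).pow_right k
  have hi := ZMod.coe_mul_inv_eq_one u hc
  refine ⟨(u : ZMod (p ^ k))⁻¹ * ((p ^ (k - 1 - m) : ℕ) : ZMod (p ^ k)), ?_⟩
  have hb' : b = ((p ^ m * u : ℕ) : ZMod (p ^ k)) := by rw [← h]; simp
  have he : k - 1 = (k - 1 - m) + m := by omega
  rw [hb']
  conv_rhs => rw [he, pow_add]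
  push_cast
  linear_combination (p : ZMod (p ^ k)) ^ (k - 1 - m) * (p : ZMod (p ^ k)) ^ m * hi

open Matrix in
theorem aux_det (m n : ℕ) (h : m < n) (A : Matrix (Fin n) (Fin m) ℤ)
    (V : Matrix (Fin m) (Fin n) ℤ) : (A * V).det = 0 := by
  have hk : LinearMap.ker V.mulVecLin ≠ ⊥ := by
    intro hk
    have := LinearMap.finrank_le_finrank_of_injective (LinearMap.ker_eq_bot.1 hk)
    simp at this
    omega
  obtain ⟨w, hw, hw0⟩ := (Submodule.ne_bot_iff _).1 hk
  refine Matrix.exists_mulVec_eq_zero_iff.1 ⟨w, hw0, ?_⟩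
  have : V *ᵥ w = 0 := hw
  rw [← Matrix.mulVec_mulVec, this, Matrix.mulVec_zero]

/-- Given `n − 1` vectors `v₁, …, v_{n−1}` in `(ZMod p^k)ⁿ` (`p` prime,
`k, n ≥ 1`), there is an index `j` such that no nonzero scalar multiple of the
standard basis vector `e_j` is a linear combination of `v₁, …, v_{n−1}`. -/
theorem exists_index_no_nonzero_multiple_of_single_in_span
    (p k n : ℕ) (hp : p.Prime) (hk : 0 < k) (hn : 0 < n)
    (v : Fin (n - 1) → (Fin n → ZMod (p ^ k))) :
    ∃ j : Fin n,
      ¬ ∃ (a : Fin (n - 1) → ZMod (p ^ k)) (b : ZMod (p ^ k)), b ≠ 0 ∧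
        ∑ i : Fin (n - 1), a i • v i =
          b • (Pi.single j 1 : Fin n → ZMod (p ^ k)) := by
  by_contra hcon
  push Not at hcon
  choose a b hb hab using hcon
  choose c hc using fun j => aux_scale p k hp hk (b j) (hb j)
  choose A hA using fun (j : Fin n) (i : Fin (n - 1)) => ZMod.intCast_surjective (c j * a j i)
  choose V hV using fun (i : Fin (n - 1)) (l : Fin n) => ZMod.intCast_surjective (v i l)
  have key : ∀ j l, ∃ d : ℤ, ∑ i, A j i * V i l =
      (p : ℤ) ^ (k - 1) * ((if j = l then 1 else 0) + p * d) := by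
    intro j l
    have h1 : ((∑ i, A j i * V i l : ℤ) : ZMod (p ^ k)) =
        (((p : ℤ) ^ (k - 1) * (if j = l then 1 else 0) : ℤ) : ZMod (p ^ k)) := by
      have h2 := congrFun (hab j) l
      simp only [Finset.sum_apply, Pi.smul_apply, smul_eq_mul, Pi.single_apply] at h2
      have h3 := hc j
      push_cast at h3 ⊢
      simp only [hA, hV, mul_assoc]
      rw [← Finset.mul_sum, h2, ← mul_assoc, h3]
      simp [eq_comm]
    rw [ZMod.intCast_eq_intCast_iff_dvd_sub] at h1
    obtain ⟨d, hd⟩ := h1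
    refine ⟨-d, ?_⟩
    have he : ((p ^ k : ℕ) : ℤ) = (p : ℤ) ^ (k - 1) * p := by
      rw [← pow_succ]; push_cast; congr 1; omega
    rw [he] at hd
    linear_combination -hd
  choose D hD using key
  have h0 := aux_det (n - 1) n (by omega) (Matrix.of A) (Matrix.of V)
  have hM : Matrix.of A * Matrix.of V =
      ((p : ℤ) ^ (k - 1)) • (1 + (p : ℤ) • Matrix.of D) := by
    ext j l
    simp [Matrix.mul_apply, hD, Matrix.one_apply]
  rw [hM, Matrix.det_smul] at h0
  have hp0 : (p : ℤ) ≠ 0 := by exact_mod_cast hp.ne_zero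
  have h4 : (1 + (p : ℤ) • Matrix.of D).det = 0 :=
    (mul_eq_zero.1 h0).resolve_left (pow_ne_zero _ (pow_ne_zero _ hp0))
  have h5 := congrArg (Int.castRingHom (ZMod p)) h4
  rw [RingHom.map_det] at h5
  have h6 : (Int.castRingHom (ZMod p)).mapMatrix (1 + (p : ℤ) • Matrix.of D) = 1 := by
    ext j l
    simp [Matrix.one_apply]
  have : Fact p.Prime := ⟨hp⟩
  rw [h6] at h5
  simp at h5
end
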